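/- For every positive integer i it holds that φ^{−2} < −w_−(i) < 1, and moreover φ·i ≤ w_+(i) < (φ²+1)·i and i ≤ η_i < (φ²+1)·i. -/

import Mathlib

open Real

noncomputable def phi : ℝ := (1 + Real.sqrt 5) / 2

noncomputable def W (i : ℕ) : ℕ → ℤ
  | 0 => ⌊phi ^ 2 * (⌊phi * i⌋ : ℝ)⌋ - ⌊phi * (⌊phi * i⌋ : ℝ)⌋
  | 1 => ⌊phi * (⌊phi * i⌋ : ℝ)⌋
  | 2 => ⌊phi ^ 2 * (⌊phi * i⌋ : ℝ)⌋
  | (k + 3) => W i (k + 2) + W i (k + 1)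

noncomputable def wplus (i : ℕ) : ℝ := phi⁻¹ ^ 2 * (W i 1 : ℝ) + phi⁻¹ * (W i 2 : ℝ)

noncomputable def wminus (i : ℕ) : ℝ := phi ^ 2 * (W i 1 : ℝ) - phi * (W i 2 : ℝ)

noncomputable def eta (i : ℕ) : ℝ := -(wplus i * wminus i)

/-!
With `m = ⌊φ i⌋`, irrationality of `φ` gives `W i 1 = m + i - 1` and `W i 2 = 2 m + i - 1`, so
`w₊(i) = φ m + (i - 1)` and `w₋(i) = ψ m + (i - 1)` are conjugate elements of `ℤ[φ]`, where
`ψ = -φ⁻¹`. The bounds on `w₊` and `w₋` follow from `φ i - 1 < m < φ i`. Their product is a norm,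
hence an integer, so the lower bound `i ≤ η_i` only requires the estimate
`i - 1 < φ⁻² w₊(i) < η_i`.
-/

open scoped goldenRatio

theorem floor_lt_of_irrational {x : ℝ} (hx : Irrational x) : (⌊x⌋ : ℝ) < x :=
  (Int.floor_le x).lt_of_ne (hx.ne_int ⌊x⌋).symm

theorem floor_goldenRatio_mul_lt {n : ℤ} (hn : n ≠ 0) : (⌊φ * n⌋ : ℝ) < φ * n :=
  floor_lt_of_irrational (goldenRatio_irrational.mul_intCast hn)

theorem floor_goldenRatio_mul_floor {n : ℤ} (hn : n ≠ 0) :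
    ⌊φ * ⌊φ * n⌋⌋ = ⌊φ * n⌋ + n - 1 := by
  have decomposition : φ * ⌊φ * n⌋ = ⌊φ * n⌋ + n + ψ * Int.fract (φ * n) := by
    rw [Int.fract]
    linear_combination (⌊φ * n⌋ : ℝ) * goldenRatio_add_goldenConj -
      (n : ℝ) * goldenConj_mul_goldenRatio
  have fract_pos : 0 < Int.fract (φ * n) := sub_pos.mpr (floor_goldenRatio_mul_lt hn)
  have neg_one_lt : -1 < ψ * Int.fract (φ * n) := by
    nlinarith [neg_one_lt_goldenConj, Int.fract_lt_one (φ * n)]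
  have lt_zero : ψ * Int.fract (φ * n) < 0 := mul_neg_of_neg_of_pos goldenConj_neg fract_pos
  rw [Int.floor_eq_iff, decomposition]
  push_cast
  constructor <;> linarith

theorem floor_goldenRatio_sq_mul_floor {n : ℤ} (hn : n ≠ 0) :
    ⌊φ ^ 2 * ⌊φ * n⌋⌋ = 2 * ⌊φ * n⌋ + n - 1 := by
  rw [goldenRatio_sq, add_one_mul, Int.floor_add_intCast, floor_goldenRatio_mul_floor hn]
  ring

theorem phi_eq_goldenRatio : phi = φ := rfl

theorem W_one {i : ℕ} (hi : 0 < i) : W i 1 = ⌊φ * i⌋ + i - 1 := by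
  simpa only [W, phi_eq_goldenRatio, Int.cast_natCast] using
    floor_goldenRatio_mul_floor (Nat.cast_ne_zero.mpr hi.ne')

theorem W_two {i : ℕ} (hi : 0 < i) : W i 2 = 2 * ⌊φ * i⌋ + i - 1 := by
  simpa only [W, phi_eq_goldenRatio, Int.cast_natCast] using
    floor_goldenRatio_sq_mul_floor (Nat.cast_ne_zero.mpr hi.ne')

theorem wplus_eq_goldenRatio_mul_floor {i : ℕ} (hi : 0 < i) :
    wplus i = φ * ⌊φ * i⌋ + (i - 1) := by
  rw [wplus, W_one hi, W_two hi, phi_eq_goldenRatio, inv_goldenRatio]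
  push_cast
  linear_combination (⌊φ * i⌋ + (i : ℝ) - 1) * goldenConj_sq -
    (⌊φ * i⌋ : ℝ) * goldenRatio_add_goldenConj

theorem wminus_eq_goldenConj_mul_floor {i : ℕ} (hi : 0 < i) :
    wminus i = ψ * ⌊φ * i⌋ + (i - 1) := by
  rw [wminus, W_one hi, W_two hi, phi_eq_goldenRatio]
  push_cast
  linear_combination (⌊φ * i⌋ + (i : ℝ) - 1) * goldenRatio_sq -
    (⌊φ * i⌋ : ℝ) * goldenRatio_add_goldenConj

theorem eta_eq_intCast (i : ℕ) :
    eta i = ((W i 2 ^ 2 - W i 1 * W i 2 - W i 1 ^ 2 : ℤ) : ℝ) := by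
  rw [eta, wplus, wminus, phi_eq_goldenRatio, inv_goldenRatio]
  push_cast
  linear_combination ((1 - ψ * φ) * W i 1 ^ 2 + (φ + ψ) * W i 1 * W i 2 - W i 2 ^ 2) *
    goldenConj_mul_goldenRatio - W i 1 * W i 2 * goldenRatio_add_goldenConj

theorem inv_goldenRatio_sq_lt_neg_wminus {i : ℕ} (hi : 0 < i) : φ⁻¹ ^ 2 < -wminus i := by
  rw [wminus_eq_goldenConj_mul_floor hi, inv_goldenRatio, neg_sq, goldenConj_sq]
  have : ψ * ⌊φ * i⌋ < ψ * (φ * i - 1) :=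
    mul_lt_mul_of_neg_left (Int.sub_one_lt_floor _) goldenConj_neg
  linear_combination this + (i : ℝ) * goldenConj_mul_goldenRatio

theorem neg_wminus_lt_one {i : ℕ} (hi : 0 < i) : -wminus i < 1 := by
  rw [wminus_eq_goldenConj_mul_floor hi]
  have floor_lt : (⌊φ * i⌋ : ℝ) < φ * i := by
    exact_mod_cast floor_goldenRatio_mul_lt (Nat.cast_ne_zero.mpr hi.ne' : (i : ℤ) ≠ 0)
  have : ψ * (φ * i) < ψ * ⌊φ * i⌋ := mul_lt_mul_of_neg_left floor_lt goldenConj_neg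
  linear_combination this - (i : ℝ) * goldenConj_mul_goldenRatio

theorem goldenRatio_mul_le_wplus {i : ℕ} (hi : 0 < i) : φ * i ≤ wplus i := by
  have one_le : (1 : ℝ) ≤ i := Nat.one_le_cast.mpr hi
  have le_floor : (i : ℝ) ≤ ⌊φ * i⌋ := by
    have : (i : ℤ) ≤ ⌊φ * i⌋ :=
      Int.le_floor.mpr (by simpa using le_mul_of_one_le_left i.cast_nonneg one_lt_goldenRatio.le)
    exact_mod_cast this
  rw [wplus_eq_goldenRatio_mul_floor hi]
  linear_combination one_le + φ * le_floor

theorem wplus_lt_goldenRatio_sq_add_one_mul {i : ℕ} (hi : 0 < i) :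
    wplus i < (φ ^ 2 + 1) * i := by
  rw [wplus_eq_goldenRatio_mul_floor hi]
  have : φ * ⌊φ * i⌋ ≤ φ * (φ * i) :=
    mul_le_mul_of_nonneg_left (Int.floor_le _) goldenRatio_pos.le
  linarith

theorem goldenRatio_sq_mul_sub_one_lt_wplus {i : ℕ} (hi : 0 < i) :
    φ ^ 2 * (i - 1) < wplus i := by
  have : φ * (φ * i - 1) < φ * ⌊φ * i⌋ :=
    mul_lt_mul_of_pos_left (Int.sub_one_lt_floor _) goldenRatio_pos
  rw [wplus_eq_goldenRatio_mul_floor hi]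
  linear_combination this + i.cast_nonneg (α := ℝ) - goldenRatio_sq

theorem wplus_pos {i : ℕ} (hi : 0 < i) : 0 < wplus i :=
  (mul_pos goldenRatio_pos (Nat.cast_pos.mpr hi)).trans_le (goldenRatio_mul_le_wplus hi)

theorem eta_lt_wplus {i : ℕ} (hi : 0 < i) : eta i < wplus i := by
  rw [eta, ← mul_neg]
  exact mul_lt_of_lt_one_right (wplus_pos hi) (neg_wminus_lt_one hi)

theorem sub_one_lt_eta {i : ℕ} (hi : 0 < i) : (i : ℝ) - 1 < eta i :=
  calc (i : ℝ) - 1 = φ ^ 2 * (i - 1) * φ⁻¹ ^ 2 := by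
        field_simp [goldenRatio_ne_zero]
    _ < wplus i * φ⁻¹ ^ 2 := by
        gcongr
        exact goldenRatio_sq_mul_sub_one_lt_wplus hi
    _ < wplus i * -wminus i :=
        mul_lt_mul_of_pos_left (inv_goldenRatio_sq_lt_neg_wminus hi) (wplus_pos hi)
    _ = eta i := mul_neg _ _

theorem le_eta {i : ℕ} (hi : 0 < i) : (i : ℝ) ≤ eta i := by
  have sub_one_lt := sub_one_lt_eta hi
  rw [eta_eq_intCast] at sub_one_lt ⊢
  exact_mod_cast Int.le_of_sub_one_lt (by exact_mod_cast sub_one_lt)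

/-- `φ⁻² < −w₋(i) < 1`, `φ·i ≤ w₊(i) < (φ²+1)·i` and `i ≤ η_i < (φ²+1)·i`. -/
theorem wplus_wminus_eta_bounds (i : ℕ) (hi : 0 < i) :
    (phi⁻¹ ^ 2 < -wminus i ∧ -wminus i < 1) ∧
      (phi * i ≤ wplus i ∧ wplus i < (phi ^ 2 + 1) * i) ∧
      ((i : ℝ) ≤ eta i ∧ eta i < (phi ^ 2 + 1) * i) := by
  rw [phi_eq_goldenRatio]
  exact ⟨⟨inv_goldenRatio_sq_lt_neg_wminus hi, neg_wminus_lt_one hi⟩,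
    ⟨goldenRatio_mul_le_wplus hi, wplus_lt_goldenRatio_sq_add_one_mul hi⟩,
    ⟨le_eta hi, (eta_lt_wplus hi).trans (wplus_lt_goldenRatio_sq_add_one_mul hi)⟩⟩
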